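/- Let μ be an l-regular partition which is edge l-disconnected. Then there exists a co-suitable node R of μ such that the partition μ_R (obtained by removing R) is l-regular and ℓ(Mull(μ)) = ℓ(Mull(μ_R)). -/

import Mathlib

noncomputable section

/-- `p : ℕ → ℕ` represents the partition `λ` with `p i = λ_{i+1}` (0-indexed parts):
a weakly decreasing, eventually zero sequence. -/
def IsPartition (p : ℕ → ℕ) : Prop :=
  (∀ i j, i ≤ j → p j ≤ p i) ∧ ∃ N, ∀ i, N ≤ i → p i = 0

/-- `ℓ(λ)`, the number of nonzero parts. -/
def plen (p : ℕ → ℕ) : ℕ := sInf {N | p N = 0}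

/-- the degree (number of boxes) of the partition. -/
def pdeg (p : ℕ → ℕ) : ℕ := ∑ i ∈ Finset.range (plen p), p i

/-- `λ` is `l`-regular: no `l` consecutive parts are equal and nonzero. -/
def IsLRegular (l : ℕ) (p : ℕ → ℕ) : Prop :=
  ∀ i, p i ≠ 0 → p (i + l - 1) ≠ p i

/-- `λ` is `l`-restricted: `λ_i - λ_{i+1} < l` for all `i`. -/
def IsLRestricted (l : ℕ) (p : ℕ → ℕ) : Prop :=
  ∀ i, p i - p (i + 1) < l

/-- the transpose (conjugate) partition. -/
def conjP (p : ℕ → ℕ) : ℕ → ℕ :=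
  fun j => ((Finset.range (plen p)).filter fun i => j < p i).card

/-- the minimal `h ≥ 1` with `λ_1 - λ_{h+1} + h ≥ l`: when `e(λ) > l`, the first
`l`-segment of the `l`-edge lies in rows `1, …, h`. -/
def firstSeg (l : ℕ) (p : ℕ → ℕ) : ℕ := sInf {h | 1 ≤ h ∧ l ≤ p 0 - p h + h}

/-- removal of the `l`-edge (with fuel): if `e(λ) ≤ l` the whole edge is removed,
otherwise the first `l`-segment is removed from rows `1, …, h` (`h = firstSeg`) and one
recurses on `(λ_{h+1}, λ_{h+2}, …)`. -/
def removeLEdgeAux (l : ℕ) : ℕ → (ℕ → ℕ) → ℕ → ℕ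
  | 0, _ => fun _ => 0
  | n + 1, p =>
    if p 0 = 0 then fun _ => 0
    else if p 0 + plen p - 1 ≤ l then fun i => p (i + 1) - 1
    else fun i =>
      if i + 1 < firstSeg l p then p (i + 1) - 1
      else if i + 1 = firstSeg l p then p 0 + firstSeg l p - 1 - l
      else removeLEdgeAux l n (fun j => p (j + firstSeg l p)) (i - firstSeg l p)

/-- the partition obtained by removing the `l`-edge of `λ`. -/
def removeLEdge (l : ℕ) (p : ℕ → ℕ) : ℕ → ℕ := removeLEdgeAux l (plen p) p

/-- `e_l(λ)`, the number of nodes of the `l`-edge. -/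
def elen (l : ℕ) (p : ℕ → ℕ) : ℕ := pdeg p - pdeg (removeLEdge l p)

/-- the length of `Mull(λ)` prescribed by the defining recursion of the Mullineux map. -/
def mullLen (l : ℕ) (p : ℕ → ℕ) : ℕ :=
  if l ∣ elen l p then elen l p - plen p else elen l p - plen p + 1

/-- the Mullineux map (with fuel): `Mull(0) = 0` and, for `λ ≠ 0` `l`-regular with `ν`
obtained from `λ` by removing the `l`-edge, `Mull(λ)` is the unique `l`-regular partition
whose `l`-edge removal leaves `Mull(ν)` and whose length is `e_l(λ) - ℓ(λ)` if
`l ∣ e_l(λ)` and `e_l(λ) - ℓ(λ) + 1` otherwise. -/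
def mullAux (l : ℕ) : ℕ → (ℕ → ℕ) → ℕ → ℕ
  | 0, _ => fun _ => 0
  | n + 1, p =>
    if p 0 = 0 then fun _ => 0
    else
      Classical.epsilon fun μ : ℕ → ℕ =>
        IsPartition μ ∧ IsLRegular l μ ∧
          removeLEdge l μ = mullAux l n (removeLEdge l p) ∧ plen μ = mullLen l p

/-- the Mullineux map. -/
def mull (l : ℕ) (p : ℕ → ℕ) : ℕ → ℕ := mullAux l (pdeg p) p

/-- the list of Mullineux components (with fuel). -/
def mullCompsAux (l : ℕ) : ℕ → (ℕ → ℕ) → List (ℕ → ℕ)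
  | 0, _ => []
  | n + 1, p =>
    if p 0 = 0 then []
    else if elen l p ≤ l then [p]
    else (fun i => if i < firstSeg l p then p i else 0) ::
      mullCompsAux l n (fun j => p (j + firstSeg l p))

/-- the Mullineux components of `λ`. -/
def mullComps (l : ℕ) (p : ℕ → ℕ) : List (ℕ → ℕ) := mullCompsAux l (plen p) p

/-- edge `l`-connectedness (with fuel): consecutive Mullineux components `α, ρ` satisfy
`α_1 - ρ_1 + ℓ(α) = l`. -/
def edgeConnAux (l : ℕ) : ℕ → (ℕ → ℕ) → Prop
  | 0, _ => True
  | n + 1, p =>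
    if elen l p ≤ l then True
    else p 0 + firstSeg l p = l + p (firstSeg l p) ∧
      edgeConnAux l n fun j => p (j + firstSeg l p)

/-- `λ` is edge `l`-connected. -/
def EdgeLConnected (l : ℕ) (p : ℕ → ℕ) : Prop := edgeConnAux l (plen p) p

/-- the node `(i+1, λ_{i+1})` (in row `i+1`, 1-indexed) is a removable node. -/
def Removable (p : ℕ → ℕ) (i : ℕ) : Prop := p (i + 1) < p i

/-- removal of the removable node in row `i+1`. -/
def removeNode (p : ℕ → ℕ) (i : ℕ) : ℕ → ℕ := fun k => if k = i then p i - 1 else p k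

/-- there is an addable node `(i+1, λ_{i+1} + 1)` in row `i+1` (1-indexed). -/
def Addable (p : ℕ → ℕ) (i : ℕ) : Prop := i ≤ plen p ∧ (i = 0 ∨ p i < p (i - 1))

/-- the removable node in row `i+1` is suitable: its residue (mod `l`) differs from the
residue of every lower addable node. -/
def Suitable (l : ℕ) (p : ℕ → ℕ) (i : ℕ) : Prop :=
  Removable p i ∧ ∀ j, i < j → Addable p j →
    ¬ ((p j : ℤ) - (j : ℤ) ≡ (p i : ℤ) - (i : ℤ) - 1 [ZMOD (l : ℤ)])

/-- the removable node in row `i+1` is co-suitable: its transpose node is a suitable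
node of the transpose partition. -/
def CoSuitable (l : ℕ) (p : ℕ → ℕ) (i : ℕ) : Prop :=
  Removable p i ∧ Suitable l (conjP p) (p i - 1)

/-- `Φ_m`: partitions with at most `m` parts and `λ_1 - λ_m ≤ l - m`. -/
def Phi (l m : ℕ) : Set (ℕ → ℕ) :=
  {p | IsPartition p ∧ plen p ≤ m ∧ p 0 - p (m - 1) ≤ l - m}

/-- `λ` is `m`-distinguished: `λ = λ⁰ + lλ̄` with
`λ⁰ = ((l-m)^k, a_1, …, a_m)`, `l - m > a_1 ≥ … ≥ a_m ≥ 0`, and `λ̄` a partition with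
`λ̄_1 ≤ m - 1`. -/
def IsDistinguished (l m : ℕ) (p : ℕ → ℕ) : Prop :=
  ∃ (k : ℕ) (a : ℕ → ℕ) (pb : ℕ → ℕ),
    IsPartition pb ∧ pb 0 < m ∧
    (∀ i j, i ≤ j → a j ≤ a i) ∧ a 0 < l - m ∧ (∀ i, m ≤ i → a i = 0) ∧
    ∀ i, p i = (if i < k then l - m else a (i - k)) + l * pb i

/-- `q` is obtained from `p` by removing a skew `l`-hook (spanning rows `a+1, …, b+1`,
1-indexed). -/
def IsHookRemoval (l : ℕ) (p q : ℕ → ℕ) : Prop :=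
  IsPartition q ∧ ∃ a b : ℕ, a ≤ b ∧
    (∀ i, i < a → q i = p i) ∧
    (∀ i, a ≤ i → i < b → q i + 1 = p (i + 1)) ∧
    q b + l = p a + (b - a) ∧
    ∀ i, b < i → q i = p i

/-- `q` is the `l`-core of `p`: obtained by repeatedly removing skew `l`-hooks until
none remain. -/
def IsCoreOf (l : ℕ) (p q : ℕ → ℕ) : Prop :=
  Relation.ReflTransGen (fun x y => IsHookRemoval l x y) p q ∧ ∀ r, ¬ IsHookRemoval l q r

/-- the `l`-core of `p`. -/
def lCore (l : ℕ) (p : ℕ → ℕ) : ℕ → ℕ := Classical.epsilon (IsCoreOf l p)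

/-!
Row `i` of a partition is encoded by the position `i - p i` of its bead. Let `s m` be the first row
of the `m`-th `l`-segment. Removing the `l`-edge moves the bead of each `s m` by `l` positions, and
the length prescribed for the Mullineux image is `m * l - s m` for every large `m`. Since the rows
of a partition and of its `l`-edge removal interlace, this length exceeds that of the image of the
removal by at most `l`, so a partition with the prescribed `l`-edge removal and length exists and
the recursion defining the Mullineux map never fails. It thus suffices to control the numbers `s m`.

If `p` is edge `l`-disconnected, there is a first segment `i` whose bead is followed by a gap: the
bead of row `s (i + 1)` is more than `l` positions further on, while the beads of the rows `s 0`,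
..., `s i` are exactly `l` apart. Among these segments take the last one, `m`, whose run of rows
equal to its first row is shortest, and remove the last node `R` of that run. If the run has more
than one row, then `s (m + 1)` does not change. Otherwise the segments after `m` up to `i` start one
row lower than before, and the gap absorbs this shift, so that `s (i + 1)` does not change. The node
`R` is co-suitable because the beads of the rows `s 0`, ..., `s i` are congruent modulo `l` and no
run among them is shorter than that of `m`.
-/

variable {l m n : ℕ} {p : ℕ → ℕ}

/-! ### Partitions, rows and beads -/

lemma IsPartition.antitone (hp : IsPartition p) : Antitone p := fun i j h => hp.1 i j h

lemma isPartition_zero : IsPartition 0 := ⟨fun _ _ _ => le_rfl, 0, fun _ _ => rfl⟩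

lemma IsPartition.eq_zero_iff_plen_le (hp : IsPartition p) {i : ℕ} : p i = 0 ↔ plen p ≤ i := by
  obtain ⟨N, hN⟩ := hp.2
  have hzero : p (plen p) = 0 := Nat.sInf_mem (s := {N | p N = 0}) ⟨N, hN N le_rfl⟩
  exact ⟨fun h => Nat.sInf_le h, fun h => Nat.le_zero.1 (hzero ▸ hp.antitone h)⟩

lemma plen_eq_of_forall_eq_zero_iff (h : ∀ i, p i = 0 ↔ n ≤ i) : plen p = n := by
  rw [plen, show {N | p N = 0} = Set.Ici n from Set.ext h, csInf_Ici]

lemma plen_zero : plen 0 = 0 := plen_eq_of_forall_eq_zero_iff (by simp)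

/-- The partition formed by the rows of `p` below the first `c` rows. -/
def dropRows (c : ℕ) (p : ℕ → ℕ) : ℕ → ℕ := fun i => p (i + c)

@[simp]
lemma dropRows_apply (c : ℕ) (p : ℕ → ℕ) (i : ℕ) : dropRows c p i = p (i + c) := rfl

lemma dropRows_dropRows (c d : ℕ) (p : ℕ → ℕ) :
    dropRows c (dropRows d p) = dropRows (d + c) p := by
  ext i
  simp only [dropRows_apply]
  congr 1
  omega

lemma isPartition_dropRows (hp : IsPartition p) (c : ℕ) : IsPartition (dropRows c p) := by
  obtain ⟨N, hN⟩ := hp.2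
  exact ⟨fun i j h => hp.antitone (by omega), N, fun i hi => hN _ (by omega)⟩

lemma plen_dropRows (hp : IsPartition p) (c : ℕ) : plen (dropRows c p) = plen p - c :=
  plen_eq_of_forall_eq_zero_iff fun i => by
    rw [dropRows_apply, hp.eq_zero_iff_plen_le, tsub_le_iff_right]

/-- The position `i - p i` of the bead that row `i` contributes to the abacus display of `p`
(read from the first row, so the positions increase). -/
def bead (p : ℕ → ℕ) (i : ℕ) : ℤ := i - p i

lemma bead_dropRows (c : ℕ) (p : ℕ → ℕ) (i : ℕ) :
    bead (dropRows c p) i = bead p (i + c) - c := by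
  simp only [bead, dropRows_apply]
  push_cast
  ring

lemma IsPartition.bead_strictMono (hp : IsPartition p) : StrictMono (bead p) := by
  intro i j hij
  have := hp.antitone hij.le
  simp only [bead]; omega

/-! ### Segments -/

lemma IsPartition.lt_firstSeg_iff (hl : 0 < l) (hp : IsPartition p) {i : ℕ} :
    i < firstSeg l p ↔ bead p i < bead p 0 + l := by
  have mem_iff : ∀ h, h ∈ {h | 1 ≤ h ∧ l ≤ p 0 - p h + h} ↔ bead p 0 + l ≤ bead p h := by
    intro h
    have := hp.antitone (Nat.zero_le h)
    simp only [Set.mem_ofPred_eq, bead]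
    rcases Nat.eq_zero_or_pos h with rfl | _ <;> omega
  have hmem : bead p 0 + l ≤ bead p (firstSeg l p) := by
    refine (mem_iff _).1 (Nat.sInf_mem ⟨l, (mem_iff l).2 ?_⟩)
    have := hp.antitone (Nat.zero_le l)
    simp only [bead]; omega
  constructor
  · intro h
    by_contra! hle
    exact h.not_ge (Nat.sInf_le ((mem_iff i).2 hle))
  · intro h
    exact hp.bead_strictMono.lt_iff_lt.1 (h.trans_le hmem)

lemma IsPartition.firstSeg_pos (hl : 0 < l) (hp : IsPartition p) : 0 < firstSeg l p :=
  (hp.lt_firstSeg_iff hl).2 (by omega)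

lemma IsPartition.firstSeg_le (hl : 0 < l) (hp : IsPartition p) : firstSeg l p ≤ l := by
  rw [← not_lt, hp.lt_firstSeg_iff hl]
  have := hp.antitone (Nat.zero_le l)
  simp only [bead]; omega

/-- The first row of the `m`-th `l`-segment of `p`, counted from `0`. Below the last nonzero row
the sequence continues with empty segments spanning `l` rows each. -/
def segStart (l : ℕ) (p : ℕ → ℕ) : ℕ → ℕ
  | 0 => 0
  | m + 1 => segStart l p m + firstSeg l (dropRows (segStart l p m) p)

lemma segStart_zero (l : ℕ) (p : ℕ → ℕ) : segStart l p 0 = 0 := rfl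

lemma segStart_succ (l : ℕ) (p : ℕ → ℕ) (m : ℕ) :
    segStart l p (m + 1) = segStart l p m + firstSeg l (dropRows (segStart l p m) p) := rfl

lemma IsPartition.lt_segStart_succ_iff (hl : 0 < l) (hp : IsPartition p) {i : ℕ} :
    i < segStart l p (m + 1) ↔ bead p i < bead p (segStart l p m) + l := by
  rcases lt_or_ge i (segStart l p m) with h | h
  · have := hp.bead_strictMono h
    exact iff_of_true (by rw [segStart_succ]; omega) (by omega)
  · obtain ⟨j, rfl⟩ := Nat.exists_eq_add_of_le' h
    have := (isPartition_dropRows hp (segStart l p m)).lt_firstSeg_iff hl (i := j)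
    rw [bead_dropRows, bead_dropRows, Nat.zero_add] at this
    rw [segStart_succ]
    omega

lemma IsPartition.bead_segStart_add_le (hl : 0 < l) (hp : IsPartition p) (m : ℕ) :
    bead p (segStart l p m) + l ≤ bead p (segStart l p (m + 1)) :=
  not_lt.1 fun h => lt_irrefl _ ((hp.lt_segStart_succ_iff hl).2 h)

lemma IsPartition.segStart_strictMono (hl : 0 < l) (hp : IsPartition p) :
    StrictMono (segStart l p) :=
  strictMono_nat_of_lt_succ fun _ => (hp.lt_segStart_succ_iff hl).2 (by omega)

lemma IsPartition.segStart_succ_le (hl : 0 < l) (hp : IsPartition p) (m : ℕ) :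
    segStart l p (m + 1) ≤ segStart l p m + l :=
  Nat.add_le_add_left ((isPartition_dropRows hp _).firstSeg_le hl) _

lemma IsPartition.segStart_succ_eq (hl : 0 < l) (hp : IsPartition p) {r : ℕ}
    (h : ∀ i, i < r ↔ bead p i < bead p (segStart l p m) + l) : segStart l p (m + 1) = r :=
  eq_of_forall_lt_iff fun i => (hp.lt_segStart_succ_iff hl).trans (h i).symm

lemma IsPartition.segStart_succ_eq_of_bead_eq (hl : 0 < l) (hp : IsPartition p) {r : ℕ}
    (h : bead p r = bead p (segStart l p m) + l) : segStart l p (m + 1) = r :=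
  hp.segStart_succ_eq hl fun _ => by rw [← h, hp.bead_strictMono.lt_iff_lt]

lemma IsPartition.exists_segStart_le_lt (hl : 0 < l) (hp : IsPartition p) (i : ℕ) :
    ∃ m, segStart l p m ≤ i ∧ i < segStart l p (m + 1) := by
  have hmono := hp.segStart_strictMono hl
  obtain ⟨m, hm, hi⟩ := hmono.exists_between_of_tendsto_atTop hmono.tendsto_atTop
    (x := i + 1) (by rw [segStart_zero]; omega)
  exact ⟨m, by omega, hi⟩

/-! ### Removal of the `l`-edge -/

lemma removeLEdgeAux_of_eq_zero (l n : ℕ) (h : p 0 = 0) : removeLEdgeAux l n p = 0 := by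
  cases n with
  | zero => rfl
  | succ n => exact if_pos h

-- The recursion also holds when `e(λ) ≤ l`, where the definition removes the whole edge at once.
lemma removeLEdgeAux_succ (hl : 0 < l) (hp : IsPartition p) (n i : ℕ) :
    removeLEdgeAux l (n + 1) p i =
      if i + 1 < firstSeg l p then p (i + 1) - 1
      else if i + 1 = firstSeg l p then p 0 + firstSeg l p - 1 - l
      else removeLEdgeAux l n (dropRows (firstSeg l p) p) (i - firstSeg l p) := by
  by_cases h0 : p 0 = 0
  · have hzero : ∀ j, p j = 0 := fun j => Nat.le_zero.1 (h0 ▸ hp.antitone (Nat.zero_le j))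
    have hle := not_lt.1 ((hp.lt_firstSeg_iff hl (i := l)).not.2 (by simp [bead, hzero]))
    rw [removeLEdgeAux_of_eq_zero _ _ h0,
      removeLEdgeAux_of_eq_zero (p := dropRows (firstSeg l p) p) _ _ (hzero _)]
    simp only [hzero, Pi.zero_apply]
    split_ifs <;> omega
  by_cases he : p 0 + plen p - 1 ≤ l
  · have hlast := hp.lt_firstSeg_iff hl (i := plen p - 1)
    have hpred := hp.lt_firstSeg_iff hl (i := firstSeg l p - 1)
    have hlen : plen p ≤ firstSeg l p := by
      by_contra! h
      have : p (plen p - 1) ≠ 0 := by rw [Ne, hp.eq_zero_iff_plen_le]; omega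
      have := hp.eq_zero_iff_plen_le (i := firstSeg l p)
      simp only [bead] at hlast
      omega
    have hzero : ∀ j, firstSeg l p ≤ j → p j = 0 :=
      fun j hj => hp.eq_zero_iff_plen_le.2 (hlen.trans hj)
    have hrow : p 0 + firstSeg l p - 1 ≤ l := by
      have := hp.eq_zero_iff_plen_le (i := firstSeg l p - 1)
      simp only [bead] at hpred
      omega
    rw [removeLEdgeAux_of_eq_zero (p := dropRows (firstSeg l p) p) _ _ (hzero _ (by omega))]
    simp only [removeLEdgeAux, h0, he, if_true, if_false, Pi.zero_apply]
    split_ifs with h1 h2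
    · rfl
    all_goals rw [hzero _ (by omega)]; omega
  · simp only [removeLEdgeAux, h0, he, if_false]
    rfl

lemma removeLEdgeAux_eq_removeLEdge (hl : 0 < l) (hp : IsPartition p) (hn : plen p ≤ n) :
    removeLEdgeAux l n p = removeLEdge l p := by
  suffices ∀ k n p, IsPartition p → plen p ≤ n → plen p ≤ k →
      removeLEdgeAux l n p = removeLEdgeAux l k p from this _ _ _ hp hn le_rfl
  intro k
  induction k with
  | zero =>
    intro n p hp _ hk
    have h0 := hp.eq_zero_iff_plen_le.2 hk
    rw [removeLEdgeAux_of_eq_zero _ _ h0, removeLEdgeAux_of_eq_zero _ _ h0]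
  | succ k ih =>
    intro n p hp hn hk
    rcases n with _ | n
    · have h0 := hp.eq_zero_iff_plen_le.2 hn
      rw [removeLEdgeAux_of_eq_zero _ _ h0, removeLEdgeAux_of_eq_zero _ _ h0]
    · have hpos := (hp.lt_firstSeg_iff hl (i := 0)).2 (by omega)
      have htail := ih n _ (isPartition_dropRows hp (firstSeg l p))
        (by rw [plen_dropRows hp]; omega) (by rw [plen_dropRows hp]; omega)
      ext i
      rw [removeLEdgeAux_succ hl hp, removeLEdgeAux_succ hl hp, htail]

lemma removeLEdge_apply (hl : 0 < l) (hp : IsPartition p) (i : ℕ) :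
    removeLEdge l p i =
      if i + 1 < firstSeg l p then p (i + 1) - 1
      else if i + 1 = firstSeg l p then p 0 + firstSeg l p - 1 - l
      else removeLEdge l (dropRows (firstSeg l p) p) (i - firstSeg l p) := by
  rw [← removeLEdgeAux_eq_removeLEdge hl hp (Nat.le_succ _), removeLEdgeAux_succ hl hp,
    removeLEdgeAux_eq_removeLEdge hl (isPartition_dropRows hp _) (by rw [plen_dropRows hp]; omega)]

lemma removeLEdge_add_firstSeg (hl : 0 < l) (hp : IsPartition p) (i : ℕ) :
    removeLEdge l p (i + firstSeg l p) = removeLEdge l (dropRows (firstSeg l p) p) i := by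
  rw [removeLEdge_apply hl hp, if_neg (by omega), if_neg (by omega), Nat.add_sub_cancel]

lemma removeLEdge_add_segStart (hl : 0 < l) (hp : IsPartition p) (m i : ℕ) :
    removeLEdge l p (i + segStart l p m) = removeLEdge l (dropRows (segStart l p m) p) i := by
  induction m generalizing i with
  | zero => rfl
  | succ m ih =>
    rw [segStart_succ, ← dropRows_dropRows,
      ← removeLEdge_add_firstSeg hl (isPartition_dropRows hp _), ← ih]
    congr 1
    omega

lemma removeLEdge_of_succ_lt (hl : 0 < l) (hp : IsPartition p) {i : ℕ}
    (hi : segStart l p m ≤ i) (hi' : i + 1 < segStart l p (m + 1)) :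
    removeLEdge l p i = p (i + 1) - 1 := by
  obtain ⟨j, rfl⟩ := Nat.exists_eq_add_of_le' hi
  rw [segStart_succ] at hi'
  rw [removeLEdge_add_segStart hl hp, removeLEdge_apply hl (isPartition_dropRows hp _),
    if_pos (by omega), dropRows_apply, add_right_comm]

lemma removeLEdge_of_succ_eq (hl : 0 < l) (hp : IsPartition p) {i : ℕ}
    (hi : i + 1 = segStart l p (m + 1)) :
    removeLEdge l p i = p (segStart l p m) + (i - segStart l p m) - l := by
  have := hp.segStart_strictMono hl (Nat.lt_add_one m)
  obtain ⟨j, rfl⟩ := Nat.exists_eq_add_of_le' (show segStart l p m ≤ i by omega)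
  rw [segStart_succ] at hi
  rw [removeLEdge_add_segStart hl hp, removeLEdge_apply hl (isPartition_dropRows hp _),
    if_neg (by omega), if_pos (by omega), dropRows_apply, Nat.zero_add]
  omega

lemma removeLEdge_le_pred (hl : 0 < l) (hp : IsPartition p) (i : ℕ) :
    removeLEdge l p i ≤ p i - 1 := by
  obtain ⟨m, hmi, him⟩ := hp.exists_segStart_le_lt hl i
  rcases (show i + 1 ≤ segStart l p (m + 1) from him).lt_or_eq with h | h
  · rw [removeLEdge_of_succ_lt hl hp hmi h]
    exact Nat.sub_le_sub_right (hp.antitone (Nat.le_add_right i 1)) 1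
  · rw [removeLEdge_of_succ_eq hl hp h]
    have := (hp.lt_segStart_succ_iff hl).1 him
    simp only [bead] at this
    omega

lemma removeLEdge_le (hl : 0 < l) (hp : IsPartition p) (i : ℕ) : removeLEdge l p i ≤ p i :=
  (removeLEdge_le_pred hl hp i).trans (Nat.pred_le _)

lemma pred_le_removeLEdge (hl : 0 < l) (hp : IsPartition p) (i : ℕ) :
    p (i + 1) - 1 ≤ removeLEdge l p i := by
  obtain ⟨m, hmi, him⟩ := hp.exists_segStart_le_lt hl i
  rcases (show i + 1 ≤ segStart l p (m + 1) from him).lt_or_eq with h | h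
  · rw [removeLEdge_of_succ_lt hl hp hmi h]
  · have := hp.bead_segStart_add_le hl m
    rw [removeLEdge_of_succ_eq hl hp h]
    rw [← h] at this
    simp only [bead] at this
    omega

lemma isPartition_removeLEdge (hl : 0 < l) (hp : IsPartition p) :
    IsPartition (removeLEdge l p) := by
  obtain ⟨N, hN⟩ := hp.2
  refine ⟨fun i j => ?_, N, fun i hi => Nat.le_zero.1 (hN i hi ▸ removeLEdge_le hl hp i)⟩
  exact (antitone_nat_of_succ_le fun i =>
    (removeLEdge_le_pred hl hp (i + 1)).trans (pred_le_removeLEdge hl hp i) :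
      Antitone (removeLEdge l p)) (a := i) (b := j)

lemma apply_eq_of_removeLEdge_add_eq (hl : 0 < l) (hp : IsPartition p) {i j : ℕ}
    (hne : removeLEdge l p i ≠ 0) (heq : removeLEdge l p (i + n) = removeLEdge l p i)
    (hij : i < j) (hjn : j ≤ i + n) : p j = removeLEdge l p i + 1 := by
  have := (isPartition_removeLEdge hl hp).antitone hjn
  have := pred_le_removeLEdge hl hp i
  have := removeLEdge_le_pred hl hp j
  have := hp.antitone (show i + 1 ≤ j from hij)
  omega

lemma isLRegular_removeLEdge (hl : 0 < l) (hp : IsPartition p) (hreg : IsLRegular l p) :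
    IsLRegular l (removeLEdge l p) := by
  intro i hne heq
  have hrun : ∀ j, i < j → j ≤ i + l - 1 → p j = removeLEdge l p i + 1 := fun j hij hj =>
    apply_eq_of_removeLEdge_add_eq (n := l - 1) hl hp hne
      (by rw [← Nat.add_sub_assoc hl, heq]) hij (by omega)
  have htop : p i ≠ removeLEdge l p i + 1 := by
    intro h
    refine hreg i (by omega) ?_
    have := removeLEdge_le_pred hl hp (i + l - 1)
    have := hp.antitone (show i ≤ i + l - 1 by omega)
    omega
  have hbot : p (i + l) ≤ removeLEdge l p i := by
    by_contra! h
    have := pred_le_removeLEdge hl hp (i + l - 1)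
    rw [show i + l - 1 + 1 = i + l by omega] at this
    have : p (i + 1) = p (i + l) := by
      have := hp.antitone (show i + 1 ≤ i + l by omega)
      have := pred_le_removeLEdge hl hp i
      omega
    exact hreg (i + 1) (by omega) (by rw [show i + 1 + l - 1 = i + l by omega]; omega)
  obtain ⟨m, hmi, him⟩ := hp.exists_segStart_le_lt hl (i + l - 1)
  have hend : i + l - 1 + 1 = segStart l p (m + 1) := by
    by_contra hne'
    have := removeLEdge_of_succ_lt hl hp hmi (by omega)
    rw [show i + l - 1 + 1 = i + l by omega] at this
    omega
  have hlast := removeLEdge_of_succ_eq hl hp hend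
  have := hp.segStart_succ_le hl m
  rcases Nat.lt_or_eq_of_le (show i ≤ segStart l p m by omega) with h | h
  · have := hrun _ h hmi
    omega
  · rw [← h] at hlast
    omega

/-! ### The length of the `l`-edge -/

lemma pdeg_eq_sum (hp : IsPartition p) (hn : plen p ≤ n) : pdeg p = ∑ i ∈ Finset.range n, p i :=
  Finset.sum_subset (Finset.range_mono hn) fun i _ hi =>
    hp.eq_zero_iff_plen_le.2 (by simpa using hi)

lemma elen_eq_sum (hl : 0 < l) (hp : IsPartition p) (hn : plen p ≤ n) :
    elen l p = ∑ i ∈ Finset.range n, (p i - removeLEdge l p i) := by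
  have hlen : plen (removeLEdge l p) ≤ n :=
    (isPartition_removeLEdge hl hp).eq_zero_iff_plen_le.1 <| Nat.le_zero.1 <|
      hp.eq_zero_iff_plen_le.2 hn ▸ removeLEdge_le hl hp n
  rw [elen, pdeg_eq_sum hp hn, pdeg_eq_sum (isPartition_removeLEdge hl hp) hlen,
    Finset.sum_tsub_distrib _ fun i _ => removeLEdge_le hl hp i]

lemma plen_le_elen (hl : 0 < l) (hp : IsPartition p) : plen p ≤ elen l p := by
  rw [elen_eq_sum hl hp le_rfl]
  calc plen p = ∑ i ∈ Finset.range (plen p), 1 := by simp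
    _ ≤ _ := Finset.sum_le_sum fun i hi => by
      have := removeLEdge_le_pred hl hp i
      have := (hp.eq_zero_iff_plen_le (i := i)).not.2 (by simpa using hi)
      omega

lemma IsPartition.sum_edge (hp : IsPartition p) (n : ℕ) :
    ∑ i ∈ Finset.range n, (p i - (p (i + 1) - 1)) + p n = p 0 + min n (plen p - 1) := by
  induction n with
  | zero => simp
  | succ n ih =>
    have := hp.antitone (Nat.le_add_right n 1)
    have := hp.eq_zero_iff_plen_le (i := n)
    have := hp.eq_zero_iff_plen_le (i := n + 1)
    rw [Finset.sum_range_succ]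
    omega

lemma sum_firstSeg (hl : 0 < l) (hp : IsPartition p) :
    ∑ i ∈ Finset.range (firstSeg l p), (p i - removeLEdge l p i) =
      min l (p 0 + (min (firstSeg l p) (plen p) - 1)) := by
  obtain ⟨h, hh⟩ := Nat.exists_eq_add_of_le' (hp.firstSeg_pos hl)
  have hrows : ∑ i ∈ Finset.range h, (p i - removeLEdge l p i) =
      ∑ i ∈ Finset.range h, (p i - (p (i + 1) - 1)) :=
    Finset.sum_congr rfl fun i hi => by
      rw [removeLEdge_apply hl hp, if_pos (by rw [hh]; simpa using hi)]
  have hlast : removeLEdge l p h = p 0 + h - l := by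
    rw [removeLEdge_apply hl hp, if_neg (by omega), if_pos hh.symm, hh]
    omega
  have := hp.sum_edge h
  have := hp.antitone (Nat.zero_le h)
  have := hp.eq_zero_iff_plen_le (i := h)
  have hbead := (hp.lt_firstSeg_iff hl (i := h)).1 (by omega)
  simp only [bead] at hbead
  rw [hh, Finset.sum_range_succ, hrows, hlast]
  omega

lemma elen_eq_add (hl : 0 < l) (hp : IsPartition p) :
    elen l p = min l (p 0 + (min (firstSeg l p) (plen p) - 1)) +
      elen l (dropRows (firstSeg l p) p) := by
  rw [elen_eq_sum hl hp (Nat.le_add_left (plen p) (firstSeg l p)), Finset.sum_range_add,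
    sum_firstSeg hl hp, elen_eq_sum hl (isPartition_dropRows hp _) (n := plen p)
      (by rw [plen_dropRows hp]; omega)]
  congr 1
  refine Finset.sum_congr rfl fun i _ => ?_
  rw [dropRows_apply, Nat.add_comm, removeLEdge_add_firstSeg hl hp]

lemma elen_of_eq_zero (hl : 0 < l) (hp : IsPartition p) (h : p 0 = 0) : elen l p = 0 := by
  rw [elen_eq_sum hl hp (hp.eq_zero_iff_plen_le.1 h), Finset.sum_range_zero]

lemma mullLen_of_eq_zero (hl : 0 < l) (hp : IsPartition p) (h : p 0 = 0) : mullLen l p = 0 := by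
  simp [mullLen, elen_of_eq_zero hl hp h]

lemma mullLen_add_firstSeg_of_eq_zero (hl : 0 < l) (hp : IsPartition p)
    (hzero : p (firstSeg l p) = 0) : mullLen l p + firstSeg l p = l := by
  have hedge := elen_eq_add hl hp
  rw [elen_of_eq_zero hl (isPartition_dropRows hp _) (by simpa using hzero),
    min_eq_right (hp.eq_zero_iff_plen_le.1 hzero), add_zero] at hedge
  have hplen := hp.eq_zero_iff_plen_le.1 hzero
  rcases Nat.eq_zero_or_pos (p 0) with h0 | h0
  · have := hp.antitone (Nat.zero_le l)
    have := hp.antitone (Nat.zero_le (l - 1))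
    have := hp.lt_firstSeg_iff hl (i := l)
    have := hp.lt_firstSeg_iff hl (i := l - 1)
    simp only [bead] at *
    rw [mullLen_of_eq_zero hl hp h0]
    omega
  have := (hp.eq_zero_iff_plen_le (i := 0)).not.1 h0.ne'
  rcases le_or_gt l (p 0 + (plen p - 1)) with hle | hlt
  · have := hp.eq_zero_iff_plen_le.2 (le_refl (plen p))
    have := hp.antitone (Nat.zero_le (plen p - 1))
    have := hp.lt_firstSeg_iff hl (i := plen p)
    have := hp.lt_firstSeg_iff hl (i := plen p - 1)
    simp only [bead] at *
    rw [min_eq_left hle] at hedge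
    rw [mullLen, hedge, if_pos dvd_rfl]
    omega
  · have := hp.eq_zero_iff_plen_le.2 (show plen p ≤ l - p 0 by omega)
    have := hp.lt_firstSeg_iff hl (i := l - p 0)
    have := hp.lt_firstSeg_iff hl (i := l - p 0 - 1)
    simp only [bead] at *
    rw [min_eq_right hlt.le] at hedge
    rw [mullLen, hedge, if_neg (Nat.not_dvd_of_pos_of_lt (by omega) hlt)]
    omega

lemma mullLen_add_firstSeg_of_ne_zero (hl : 0 < l) (hp : IsPartition p)
    (hne : p (firstSeg l p) ≠ 0) :
    mullLen l p + firstSeg l p = mullLen l (dropRows (firstSeg l p) p) + l := by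
  have hlt := hp.eq_zero_iff_plen_le.not.1 hne
  have hle := hp.lt_firstSeg_iff hl (i := firstSeg l p)
  simp only [bead] at hle
  have hedge : elen l p = l + elen l (dropRows (firstSeg l p) p) := by
    rw [elen_eq_add hl hp, min_eq_left]
    omega
  have hlen := plen_dropRows hp (firstSeg l p)
  have := plen_le_elen hl (isPartition_dropRows hp (firstSeg l p))
  have := hp.firstSeg_le hl
  simp only [mullLen, hedge, Nat.dvd_add_right dvd_rfl]
  split_ifs <;> omega

lemma mullLen_add_firstSeg (hl : 0 < l) (hp : IsPartition p) :
    mullLen l p + firstSeg l p = mullLen l (dropRows (firstSeg l p) p) + l := by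
  by_cases h : p (firstSeg l p) = 0
  · rw [mullLen_add_firstSeg_of_eq_zero hl hp h,
      mullLen_of_eq_zero hl (isPartition_dropRows hp _) (by simpa using h), Nat.zero_add]
  · exact mullLen_add_firstSeg_of_ne_zero hl hp h

lemma mullLen_add_segStart (hl : 0 < l) (hp : IsPartition p) (m : ℕ) :
    mullLen l p + segStart l p m = mullLen l (dropRows (segStart l p m) p) + m * l := by
  induction m with
  | zero => rw [segStart_zero, Nat.zero_mul]; rfl
  | succ m ih =>
    have hstep := mullLen_add_firstSeg hl (isPartition_dropRows hp (segStart l p m))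
    rw [dropRows_dropRows, ← segStart_succ] at hstep
    rw [Nat.succ_mul]
    have := segStart_succ l p m
    omega

lemma mullLen_add_segStart_of_plen_le (hl : 0 < l) (hp : IsPartition p)
    (h : plen p ≤ segStart l p m) : mullLen l p + segStart l p m = m * l := by
  rw [mullLen_add_segStart hl hp, mullLen_of_eq_zero hl (isPartition_dropRows hp _), zero_add]
  rw [dropRows_apply, hp.eq_zero_iff_plen_le]
  omega

/-! ### The length after removal of the `l`-edge -/

lemma bead_removeLEdge_le (hl : 0 < l) (hp : IsPartition p) {i : ℕ}
    (hi : i < segStart l p (m + 1)) :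
    bead (removeLEdge l p) i ≤ bead p (segStart l p m) + l := by
  obtain ⟨e, he⟩ : ∃ e, segStart l p (m + 1) = e + 1 := Nat.exists_eq_succ_of_ne_zero (by omega)
  have hlast := removeLEdge_of_succ_eq hl hp he.symm
  have := hp.segStart_strictMono hl (Nat.lt_add_one m)
  have hmono := (isPartition_removeLEdge hl hp).bead_strictMono.monotone (show i ≤ e by omega)
  simp only [bead] at *
  omega

-- Removing a segment moves the bead of its first row by `l` positions; that bead then belongs
-- to the last row of the segment, unless the partition is exhausted there.
lemma exists_bead_removeLEdge_eq (hl : 0 < l) (hp : IsPartition p) (m : ℕ) :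
    ∃ i, bead (removeLEdge l p) i = bead p (segStart l p m) + l := by
  have hlt := hp.segStart_strictMono hl (Nat.lt_add_one m)
  obtain ⟨e, he⟩ : ∃ e, segStart l p (m + 1) = e + 1 := Nat.exists_eq_succ_of_ne_zero (by omega)
  have hlast := removeLEdge_of_succ_eq hl hp he.symm
  rcases le_or_gt l (p (segStart l p m) + (e - segStart l p m)) with hle | hgt
  · refine ⟨e, ?_⟩
    simp only [bead]
    omega
  · have hend := hp.bead_segStart_add_le hl m
    have hrow := (hp.lt_segStart_succ_iff hl (m := m) (i := e)).1 (by omega)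
    have := removeLEdge_le_pred hl hp (e + 1)
    have := hp.antitone (Nat.le_add_right e 1)
    have := hp.segStart_succ_le hl m
    refine ⟨e + 1, ?_⟩
    rw [he] at hend
    simp only [bead] at *
    omega

lemma segStart_le_segStart_removeLEdge (hl : 0 < l) (hp : IsPartition p) (m : ℕ) :
    segStart l p m ≤ segStart l (removeLEdge l p) m := by
  have hv := isPartition_removeLEdge hl hp
  induction m with
  | zero => rfl
  | succ m ih =>
    rw [← not_lt]
    intro h
    have := bead_removeLEdge_le hl hp h
    have := hv.bead_segStart_add_le hl m
    have := hv.bead_strictMono.monotone ih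
    have := removeLEdge_le_pred hl hp (segStart l p m)
    have := hv.antitone ih
    have := hp.segStart_succ_le hl m
    simp only [bead] at *
    omega

lemma bead_segStart_removeLEdge_le (hl : 0 < l) (hp : IsPartition p) (m : ℕ) :
    bead (removeLEdge l p) (segStart l (removeLEdge l p) m) ≤ bead p (segStart l p m) + l := by
  have hv := isPartition_removeLEdge hl hp
  induction m with
  | zero =>
    have := bead_removeLEdge_le hl hp (m := 0) (i := 0)
      (hp.segStart_strictMono hl (Nat.lt_add_one 0))
    simpa [segStart_zero]
  | succ m ih =>
    obtain ⟨i, hi⟩ := exists_bead_removeLEdge_eq hl hp (m + 1)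
    rw [← hi, hv.bead_strictMono.le_iff_le, ← not_lt, hv.lt_segStart_succ_iff hl, hi]
    have := hp.bead_segStart_add_le hl m
    omega

lemma mullLen_mem_Icc (hl : 0 < l) (hp : IsPartition p) :
    mullLen l p ∈
      Set.Icc (mullLen l (removeLEdge l p)) (mullLen l (removeLEdge l p) + l) := by
  have hv := isPartition_removeLEdge hl hp
  have hlen : plen p ≤ segStart l p (plen p) := (hp.segStart_strictMono hl).le_apply
  have hle := segStart_le_segStart_removeLEdge hl hp (plen p)
  have hbead := bead_segStart_removeLEdge_le hl hp (plen p)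
  have hzero := hp.eq_zero_iff_plen_le.2 hlen
  have hvzero : removeLEdge l p (segStart l (removeLEdge l p) (plen p)) = 0 := Nat.le_zero.1
    (hp.eq_zero_iff_plen_le.2 (hlen.trans hle) ▸ removeLEdge_le hl hp _)
  have hp' := mullLen_add_segStart_of_plen_le hl hp hlen
  have hv' := mullLen_add_segStart_of_plen_le hl hv (hv.eq_zero_iff_plen_le.1 hvzero)
  simp only [bead] at hbead
  constructor <;> omega

/-! ### Partitions with a prescribed `l`-edge removal -/

lemma isLRegular_of_isLRegular_removeLEdge (hl : 0 < l) (hp : IsPartition p)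
    (hreg : IsLRegular l (removeLEdge l p))
    (htail : IsLRegular l (dropRows (plen (removeLEdge l p)) p)) : IsLRegular l p := by
  intro i hne heq
  have hv := isPartition_removeLEdge hl hp
  rcases Nat.eq_zero_or_pos (removeLEdge l p i) with hzero | hpos
  · obtain ⟨j, rfl⟩ := Nat.exists_eq_add_of_le' (hv.eq_zero_iff_plen_le.1 hzero)
    refine htail j hne ?_
    rw [dropRows_apply, dropRows_apply, ← heq]
    congr 1
    omega
  have hl2 : l ≠ 1 := by
    rintro rfl
    exact hreg i hpos.ne' rfl
  have hrun : removeLEdge l p (i + l - 2) = p i - 1 ∧ removeLEdge l p i = p i - 1 := by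
    have := pred_le_removeLEdge hl hp (i + l - 2)
    rw [show i + l - 2 + 1 = i + l - 1 by omega, heq] at this
    have := hv.antitone (show i ≤ i + l - 2 by omega)
    have := removeLEdge_le_pred hl hp i
    omega
  obtain ⟨m, hmi, him⟩ := hp.exists_segStart_le_lt hl i
  have hstart : segStart l p m = i := by
    by_contra h
    have hprev := removeLEdge_of_succ_lt hl hp (show segStart l p m ≤ i - 1 by omega) (by omega)
    rw [Nat.sub_add_cancel (by omega)] at hprev
    refine hreg (i - 1) (by omega) ?_
    rw [show i - 1 + l - 1 = i + l - 2 by omega]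
    omega
  have hend : i + l - 1 + 1 = segStart l p (m + 1) := by
    have := hp.segStart_succ_le hl m
    have := (hp.lt_segStart_succ_iff hl (m := m) (i := i + l - 1)).2
      (by rw [hstart]; simp only [bead, heq]; omega)
    omega
  have hlast := removeLEdge_of_succ_eq hl hp hend
  rw [hstart] at hlast
  exact hreg i hpos.ne' (by omega)

/-- The rows that become the first `n + 1` rows of `w` when a segment of `l` nodes is removed
from them, followed by the rows of `q`. -/
def prependSegment (l n : ℕ) (w q : ℕ → ℕ) : ℕ → ℕ := fun i =>
  if i = 0 then w n + l - n else if i ≤ n then w (i - 1) + 1 else q (i - (n + 1))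

section prependSegment

variable {w q : ℕ → ℕ}

lemma dropRows_prependSegment (l n : ℕ) (w q : ℕ → ℕ) :
    dropRows (n + 1) (prependSegment l n w q) = q := by
  ext i
  rw [dropRows_apply, prependSegment, if_neg (by omega), if_neg (by omega), Nat.add_sub_cancel]

lemma isPartition_prependSegment (hw : IsPartition w) (hq : IsPartition q)
    (hbead : bead w n < bead w 0 + l) (hfit : q 0 ≤ w n + 1) :
    IsPartition (prependSegment l n w q) := by
  obtain ⟨N, hN⟩ := hq.2
  simp only [bead] at hbead
  refine ⟨fun i j => ?_, N + (n + 1), fun i hi => ?_⟩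
  · refine (antitone_nat_of_succ_le fun i => ?_ : Antitone (prependSegment l n w q))
      (a := i) (b := j)
    have := hw.antitone (Nat.zero_le i)
    have := hw.antitone (Nat.sub_le i 1)
    have := hq.antitone (Nat.zero_le (i + 1 - (n + 1)))
    have := hw.antitone (Nat.zero_le n)
    have : i ≤ n → w n ≤ w (i - 1) := fun h => hw.antitone (by omega)
    have := hq.antitone (show i - (n + 1) ≤ i + 1 - (n + 1) by omega)
    simp only [prependSegment, Nat.add_sub_cancel, Nat.add_one_ne_zero, if_false]
    split_ifs <;> omega
  · rw [prependSegment, if_neg (by omega), if_neg (by omega), hN _ (by omega)]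

lemma firstSeg_prependSegment (hw : IsPartition w) (hq : IsPartition q)
    (hbead : bead w n < bead w 0 + l) (hfit : q 0 ≤ w n + 1) :
    firstSeg l (prependSegment l n w q) = n + 1 := by
  have hp := isPartition_prependSegment hw hq hbead hfit
  have hl : 0 < l := by
    have := hw.bead_strictMono.monotone (Nat.zero_le n)
    omega
  have hfirst : prependSegment l n w q 0 = w n + l - n := if_pos rfl
  have hlast : n ≠ 0 → prependSegment l n w q n = w (n - 1) + 1 := fun h => by
    rw [prependSegment, if_neg h, if_pos le_rfl]
  have hnext : prependSegment l n w q (n + 1) = q 0 := by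
    rw [prependSegment, if_neg (by omega), if_neg (by omega), Nat.sub_self]
  have := hw.antitone (Nat.sub_le n 1)
  have hmem := hp.lt_firstSeg_iff hl (i := n)
  have hnotMem := hp.lt_firstSeg_iff hl (i := n + 1)
  simp only [bead, hfirst, hnext] at hbead hmem hnotMem
  rcases eq_or_ne n 0 with rfl | hn
  · rw [hfirst] at hmem
    omega
  · rw [hlast hn] at hmem
    omega

lemma removeLEdge_prependSegment (hw : IsPartition w) (hq : IsPartition q)
    (hbead : bead w n < bead w 0 + l) (hfit : q 0 ≤ w n + 1)
    (hrem : removeLEdge l q = dropRows (n + 1) w) :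
    removeLEdge l (prependSegment l n w q) = w := by
  have hl : 0 < l := by
    have := hw.bead_strictMono.monotone (Nat.zero_le n)
    omega
  ext i
  rw [removeLEdge_apply hl (isPartition_prependSegment hw hq hbead hfit),
    firstSeg_prependSegment hw hq hbead hfit, dropRows_prependSegment, hrem]
  simp only [bead] at hbead
  split_ifs with h1 h2
  · rw [prependSegment, if_neg (by omega), if_pos (by omega)]
    simp
  · obtain rfl : i = n := by omega
    rw [prependSegment, if_pos rfl]
    omega
  · rw [dropRows_apply, Nat.sub_add_cancel (by omega)]

lemma plen_prependSegment (hw : IsPartition w) (hq : IsPartition q)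
    (hbead : bead w n < bead w 0 + l) : plen (prependSegment l n w q) = n + 1 + plen q := by
  have := hw.antitone (Nat.zero_le n)
  simp only [bead] at hbead
  refine plen_eq_of_forall_eq_zero_iff fun i => ?_
  rw [prependSegment]
  rcases le_or_gt i n with h | h
  · refine iff_of_false (Nat.ne_of_gt ?_) (by omega)
    split_ifs <;> omega
  · rw [if_neg (by omega), if_neg (by omega), hq.eq_zero_iff_plen_le]
    omega

end prependSegment

lemma exists_removeLEdge_eq_dropRows_eq {v q : ℕ → ℕ} (hl : 0 < l) (hv : IsPartition v)
    (hq : IsPartition q) (n : ℕ) (hrem : removeLEdge l q = dropRows n v)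
    (hfit : ∀ j, j + 1 = n → q 0 ≤ v j + 1) :
    ∃ p, IsPartition p ∧ removeLEdge l p = v ∧ dropRows n p = q ∧ plen p = n + plen q := by
  induction n using Nat.strong_induction_on generalizing q with
  | _ n ih =>
    rcases n with _ | n
    · exact ⟨q, hq, hrem, rfl, (Nat.zero_add _).symm⟩
    have hex : ∃ d, bead v n < bead v d + l := ⟨n, by omega⟩
    classical
    obtain ⟨d, hd, hmin⟩ : ∃ d, bead v n < bead v d + l ∧ ∀ j < d, bead v j + l ≤ bead v n :=
      ⟨Nat.find hex, Nat.find_spec hex, fun j hj => not_lt.1 (Nat.find_min hex hj)⟩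
    have hdn : d ≤ n := by
      by_contra! h
      have := hmin n h
      omega
    obtain ⟨k, rfl⟩ := Nat.exists_eq_add_of_le' hdn
    have hw := isPartition_dropRows hv d
    have hbead : bead (dropRows d v) k < bead (dropRows d v) 0 + l := by
      rw [bead_dropRows, bead_dropRows, Nat.zero_add]
      omega
    have hfit' : q 0 ≤ dropRows d v k + 1 := hfit _ rfl
    have hrem' : removeLEdge l q = dropRows (k + 1) (dropRows d v) := by
      rw [hrem, dropRows_dropRows, show k + d + 1 = d + (k + 1) by omega]
    obtain ⟨p, hp, hpv, hdrop, hlen⟩ := ih d (by omega)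
      (isPartition_prependSegment hw hq hbead hfit')
      (removeLEdge_prependSegment hw hq hbead hfit' hrem') (by
        rintro j rfl
        have := hmin j (by omega)
        simp only [prependSegment, dropRows_apply, bead, if_true] at *
        omega)
    refine ⟨p, hp, hpv, ?_, ?_⟩
    · rw [show k + d + 1 = d + (k + 1) by omega, ← dropRows_dropRows, hdrop,
        dropRows_prependSegment]
    · rw [hlen, plen_prependSegment hw hq hbead]
      omega

/-- The partition `(1^s)` if `s < l`, and `(2, 1^(l - 1))` if `s = l`: an `l`-regular partition
with `s` parts all of whose nodes lie in its `l`-edge. Only `s ≤ l` is of interest. -/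
def thinPartition (l s : ℕ) : ℕ → ℕ := fun i =>
  (if i < s then 1 else 0) + if i + l ≤ s then 1 else 0

section thinPartition

variable {s : ℕ}

lemma isPartition_thinPartition (l s : ℕ) : IsPartition (thinPartition l s) := by
  refine ⟨fun i j h => ?_, s + 1, fun i hi => ?_⟩ <;>
    simp only [thinPartition] <;> split_ifs <;> omega

lemma plen_thinPartition (hl : 0 < l) (s : ℕ) : plen (thinPartition l s) = s :=
  plen_eq_of_forall_eq_zero_iff fun i => by
    rw [thinPartition]
    rcases le_or_gt s i with h | h
    · rw [if_neg (by omega), if_neg (by omega)]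
      omega
    · rw [if_pos h]
      omega

lemma isLRegular_thinPartition (hl : 2 ≤ l) (hs : s ≤ l) : IsLRegular l (thinPartition l s) := by
  intro i
  simp only [thinPartition]
  split_ifs <;> omega

lemma removeLEdge_thinPartition (hl : 2 ≤ l) (hs : s ≤ l) :
    removeLEdge l (thinPartition l s) = 0 := by
  have hq := isPartition_thinPartition l s
  suffices removeLEdge l (thinPartition l s) 0 = 0 from funext fun i =>
    Nat.le_zero.1 (this ▸ (isPartition_removeLEdge (by omega) hq).antitone (Nat.zero_le i))
  have := hq.lt_firstSeg_iff (by omega : 0 < l) (i := 1)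
  have := removeLEdge_le_pred (by omega : 0 < l) hq 0
  have := hq.firstSeg_pos (by omega : 0 < l)
  rw [removeLEdge_apply (by omega) hq] at *
  simp only [thinPartition, bead] at *
  split_ifs at * <;> omega

end thinPartition

lemma exists_isLRegular_removeLEdge_eq {v : ℕ → ℕ} {r : ℕ} (hl : 2 ≤ l) (hv : IsPartition v)
    (hreg : IsLRegular l v) (hr : r ∈ Set.Icc (plen v) (plen v + l)) :
    ∃ p, IsPartition p ∧ IsLRegular l p ∧ removeLEdge l p = v ∧ plen p = r := by
  obtain ⟨s, rfl⟩ := Nat.exists_eq_add_of_le hr.1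
  have hs : s ≤ l := Nat.add_le_add_iff_left.1 hr.2
  obtain ⟨p, hp, hpv, hdrop, hlen⟩ := exists_removeLEdge_eq_dropRows_eq (l := l) (by omega) hv
    (isPartition_thinPartition l s) (plen v)
    (by
      rw [removeLEdge_thinPartition hl hs]
      exact funext fun i => (hv.eq_zero_iff_plen_le.2 (Nat.le_add_left _ _)).symm)
    (fun j hj => by
      have := hv.eq_zero_iff_plen_le (i := j)
      simp only [thinPartition]
      split_ifs <;> omega)
  refine ⟨p, hp, isLRegular_of_isLRegular_removeLEdge (by omega) hp (hpv ▸ hreg) ?_, hpv, ?_⟩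
  · rw [hpv, hdrop]
    exact isLRegular_thinPartition hl hs
  · rw [hlen, plen_thinPartition (by omega)]

/-! ### The length of the Mullineux image -/

lemma mullAux_of_eq_zero (l n : ℕ) (h : p 0 = 0) : mullAux l n p = 0 := by
  cases n with
  | zero => rfl
  | succ n => exact if_pos h

lemma mullAux_spec (hl : 2 ≤ l) (hp : IsPartition p) (hreg : IsLRegular l p) (hn : pdeg p ≤ n) :
    IsPartition (mullAux l n p) ∧ IsLRegular l (mullAux l n p) ∧
      plen (mullAux l n p) = mullLen l p := by
  have hl0 : 0 < l := by omega
  induction n generalizing p with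
  | zero =>
    have : plen p ≤ pdeg p := (plen_le_elen hl0 hp).trans (Nat.sub_le _ _)
    have h0 := hp.eq_zero_iff_plen_le (i := 0) |>.2 (by omega)
    rw [mullAux_of_eq_zero _ _ h0, mullLen_of_eq_zero hl0 hp h0]
    exact ⟨isPartition_zero, fun _ h => absurd rfl h, plen_zero⟩
  | succ n ih =>
    by_cases h0 : p 0 = 0
    · rw [mullAux_of_eq_zero _ _ h0, mullLen_of_eq_zero hl0 hp h0]
      exact ⟨isPartition_zero, fun _ h => absurd rfl h, plen_zero⟩
    have hdeg : pdeg (removeLEdge l p) ≤ n := by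
      have hpos := hp.eq_zero_iff_plen_le (i := 0) |>.not.1 h0
      have := plen_le_elen hl0 hp
      rw [elen] at this
      omega
    obtain ⟨hv, hvreg, hvlen⟩ :=
      ih (isPartition_removeLEdge hl0 hp) (isLRegular_removeLEdge hl0 hp hreg) hdeg
    obtain ⟨h1, h2, -, h4⟩ := Classical.epsilon_spec
      (exists_isLRegular_removeLEdge_eq hl hv hvreg (hvlen ▸ mullLen_mem_Icc hl0 hp))
    rw [mullAux, if_neg h0]
    exact ⟨h1, h2, h4⟩

lemma plen_mull (hl : 2 ≤ l) (hp : IsPartition p) (hreg : IsLRegular l p) :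
    plen (mull l p) = mullLen l p :=
  (mullAux_spec hl hp hreg le_rfl).2.2

/-! ### Runs of equal rows -/

lemma IsPartition.lt_conjP_iff (hp : IsPartition p) {i j : ℕ} : i < conjP p j ↔ j < p i := by
  have hex : ∃ N, p N ≤ j := hp.2.imp fun N hN => by rw [hN N le_rfl]; exact Nat.zero_le j
  have hfind : ∀ i, j < p i ↔ i < Nat.find hex := fun i => by
    rw [Nat.lt_find_iff]
    exact ⟨fun h m hm => not_le.2 (h.trans_le (hp.antitone hm)), fun h => not_le.1 (h i le_rfl)⟩
  have hfilter : (Finset.range (plen p)).filter (fun i => j < p i) =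
      Finset.range (Nat.find hex) := by
    ext i
    have := hp.eq_zero_iff_plen_le (i := i)
    simp only [Finset.mem_filter, Finset.mem_range, ← hfind]
    omega
  rw [conjP, hfilter, Finset.card_range, hfind]

/-- The number of rows from row `a` downwards that have the same length as row `a`. This reading
is only valid if row `a` is nonzero. -/
def runLen (p : ℕ → ℕ) (a : ℕ) : ℕ := conjP p (p a - 1) - a

lemma IsPartition.lt_runLen_iff (hp : IsPartition p) {a t : ℕ} (ha : p a ≠ 0) :
    t < runLen p a ↔ p (a + t) = p a := by
  have := hp.antitone (Nat.le_add_right a t)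
  rw [runLen, lt_tsub_iff_left, hp.lt_conjP_iff]
  omega

lemma IsPartition.runLen_pos (hp : IsPartition p) {a : ℕ} (ha : p a ≠ 0) : 0 < runLen p a :=
  (hp.lt_runLen_iff ha).2 rfl

lemma IsLRegular.runLen_lt (hl : 0 < l) (hp : IsPartition p) (hreg : IsLRegular l p) {a : ℕ}
    (ha : p a ≠ 0) : runLen p a < l := by
  by_contra! h
  refine hreg a ha ?_
  rw [Nat.add_sub_assoc hl]
  exact (hp.lt_runLen_iff ha).1 (by omega)

lemma coSuitable_of_forall_not_modEq (hp : IsPartition p) {r : ℕ} (hr : Removable p r)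
    (h : ∀ u ≤ r, (∀ t < u, p u < p t) → ¬ bead p u ≡ bead p r + 1 [ZMOD l]) :
    CoSuitable l p r := by
  rw [Removable] at hr
  have hcol : conjP p (p r - 1) = r + 1 := eq_of_forall_lt_iff fun i => by
    rw [hp.lt_conjP_iff]
    rcases le_or_gt i r with hi | hi
    · have := hp.antitone hi
      omega
    · have := hp.antitone (show r + 1 ≤ i from hi)
      omega
  refine ⟨hr, ?_, fun j hj hadd hres => ?_⟩
  · rw [Removable, Nat.sub_add_cancel (by omega), hcol, Nat.lt_succ_iff, ← not_lt,
      hp.lt_conjP_iff]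
    omega
  have hju : ∀ i, i < conjP p j ↔ j < p i := fun i => hp.lt_conjP_iff
  have hle : conjP p j ≤ r := by
    rw [← not_lt, hju]
    omega
  have hlt : ∀ t < conjP p j, j < p t := fun t => (hju t).1
  have hge := (hju (conjP p j)).not.1 (lt_irrefl _)
  have heq : p (conjP p j) = j := by
    rcases hadd.2 with rfl | hadd
    · omega
    have := hp.lt_conjP_iff.1 hadd
    omega
  refine h _ hle (fun t ht => heq.symm ▸ hlt t ht) ?_
  rw [hcol] at hres
  convert hres using 1 <;> simp only [bead] <;> omega

/-! ### The first gap of an edge disconnected partition -/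

/-- Segment `i` is the first `l`-segment of `p` for which the equation defining edge
`l`-connectedness fails. In terms of beads, the equation for segment `j` says that the bead of the
first row of segment `j + 1` lies exactly `l` positions after that of segment `j`. -/
def IsFirstGap (l : ℕ) (p : ℕ → ℕ) (i : ℕ) : Prop :=
  (∀ j < i, bead p (segStart l p (j + 1)) = bead p (segStart l p j) + l) ∧
    bead p (segStart l p i) + l < bead p (segStart l p (i + 1)) ∧ p (segStart l p (i + 1)) ≠ 0

lemma exists_gap_of_not_edgeConnAux (hl : 0 < l) (hp : IsPartition p)
    (h : ¬ edgeConnAux l n (dropRows (segStart l p m) p)) :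
    ∃ i, m ≤ i ∧
      (∀ j, m ≤ j → j < i → bead p (segStart l p (j + 1)) = bead p (segStart l p j) + l) ∧
      bead p (segStart l p i) + l < bead p (segStart l p (i + 1)) ∧
      p (segStart l p (i + 1)) ≠ 0 := by
  induction n generalizing m with
  | zero => exact absurd trivial h
  | succ n ih =>
    have hq := isPartition_dropRows hp (segStart l p m)
    rw [edgeConnAux] at h
    split_ifs at h with hshort
    · exact absurd trivial h
    have hnext : p (segStart l p (m + 1)) ≠ 0 := by
      intro h0
      have := elen_eq_add hl hq
      have := elen_of_eq_zero hl (isPartition_dropRows hq (firstSeg l _))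
        (by rwa [dropRows_dropRows, dropRows_apply, Nat.zero_add, ← segStart_succ])
      omega
    have hle := hp.bead_segStart_add_le hl m
    by_cases heq : bead p (segStart l p (m + 1)) = bead p (segStart l p m) + l
    · have hrest : ¬ edgeConnAux l n (dropRows (segStart l p (m + 1)) p) := by
        intro hconn
        refine h ⟨?_, ?_⟩
        · rw [segStart_succ] at heq
          simp only [dropRows_apply, bead, Nat.add_zero, Nat.add_comm _ (segStart l p m)] at *
          omega
        · rw [segStart_succ, ← dropRows_dropRows] at hconn
          exact hconn
      obtain ⟨i, hmi, hjoin, hgap⟩ := ih hrest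
      refine ⟨i, by omega, fun j hmj hji => ?_, hgap⟩
      rcases hmj.eq_or_lt with rfl | hlt
      · exact heq
      · exact hjoin j hlt hji
    · exact ⟨m, le_rfl, fun j _ _ => by omega, by omega, hnext⟩

lemma exists_isFirstGap (hl : 0 < l) (hp : IsPartition p) (h : ¬ EdgeLConnected l p) :
    ∃ i, IsFirstGap l p i := by
  obtain ⟨i, -, hjoin, hgap⟩ := exists_gap_of_not_edgeConnAux (m := 0) hl hp h
  exact ⟨i, fun j => hjoin j (Nat.zero_le j), hgap⟩

namespace IsFirstGap

variable {i : ℕ}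

lemma apply_segStart_ne_zero (hl : 0 < l) (hp : IsPartition p) (h : IsFirstGap l p i)
    (hm : m ≤ i) : p (segStart l p m) ≠ 0 := by
  have := hp.antitone ((hp.segStart_strictMono hl).monotone (show m ≤ i + 1 by omega))
  have := h.2.2
  omega

lemma bead_segStart (h : IsFirstGap l p i) (hm : m ≤ i) :
    bead p (segStart l p m) = bead p 0 + m * l := by
  induction m with
  | zero => simp [segStart_zero]
  | succ m ih =>
    rw [h.1 m hm, ih (by omega)]
    push_cast
    ring

lemma bead_segStart_modEq (h : IsFirstGap l p i) (hm : m ≤ i) (hn : n ≤ i) :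
    bead p (segStart l p m) ≡ bead p (segStart l p n) [ZMOD l] := by
  simp [h.bead_segStart hm, h.bead_segStart hn, Int.ModEq]

end IsFirstGap

/-- Among the `l`-segments `0, …, i` of `p`, segment `m` is the last one with the fewest rows
equal to its first row. -/
def IsShortestRun (l : ℕ) (p : ℕ → ℕ) (i m : ℕ) : Prop :=
  m ≤ i ∧ (∀ j ≤ i, runLen p (segStart l p m) ≤ runLen p (segStart l p j)) ∧
    ∀ j ≤ i, m < j → runLen p (segStart l p m) < runLen p (segStart l p j)

lemma exists_isShortestRun (l : ℕ) (p : ℕ → ℕ) (i : ℕ) : ∃ m, IsShortestRun l p i m := by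
  obtain ⟨m, hm, hmin⟩ := Finset.exists_min_image (Finset.range (i + 1))
    (fun m => toLex (runLen p (segStart l p m), i - m)) ⟨0, by simp⟩
  simp only [Finset.mem_range, Prod.Lex.toLex_le_toLex, Nat.lt_succ_iff] at hm hmin
  refine ⟨m, hm, fun j hj => ?_, fun j hj hmj => ?_⟩ <;>
    rcases hmin j hj with h | ⟨h, h'⟩ <;> omega

/-! ### Removing the last node of a shortest run -/

lemma isPartition_removeNode {r : ℕ} (hp : IsPartition p) (hr : Removable p r) :
    IsPartition (removeNode p r) := by
  rw [Removable] at hr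
  obtain ⟨N, hN⟩ := hp.2
  refine ⟨fun i j hij => ?_, N, fun i hi => ?_⟩
  · have := hp.antitone hij
    have : r < j → p j ≤ p (r + 1) := fun h => hp.antitone h
    simp only [removeNode]
    split_ifs <;> subst_vars <;> omega
  · have := hN i hi
    rw [removeNode]
    split_ifs <;> subst_vars <;> omega

lemma bead_removeNode_self {r : ℕ} (hr : p r ≠ 0) :
    bead (removeNode p r) r = bead p r + 1 := by
  simp only [bead, removeNode, if_true]
  omega

lemma bead_removeNode_of_ne {r i : ℕ} (hi : i ≠ r) : bead (removeNode p r) i = bead p i := by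
  simp only [bead, removeNode, if_neg hi]

lemma segStart_removeNode_of_le {r : ℕ} (hl : 0 < l) (hp : IsPartition p) (hr : Removable p r)
    (hle : segStart l p m ≤ r) : segStart l (removeNode p r) m = segStart l p m := by
  induction m with
  | zero => rfl
  | succ m ih =>
    have hlt := hp.segStart_strictMono hl (Nat.lt_add_one m)
    specialize ih (by omega)
    refine (isPartition_removeNode hp hr).segStart_succ_eq hl fun i => ?_
    rw [ih, bead_removeNode_of_ne (i := segStart l p m) (by omega), hp.lt_segStart_succ_iff hl]
    rcases eq_or_ne i r with rfl | hi
    · have := (hp.lt_segStart_succ_iff hl (m := m) (i := i)).not.1 (by omega)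
      rw [bead_removeNode_self (Nat.ne_zero_of_lt hr)]
      omega
    · rw [bead_removeNode_of_ne hi]

lemma mullLen_removeNode_of_segStart_eq {r : ℕ} (hl : 0 < l) (hp : IsPartition p)
    (hr : Removable p r) (heq : segStart l (removeNode p r) n = segStart l p n)
    (hlt : r < segStart l p n) : mullLen l (removeNode p r) = mullLen l p := by
  have hq := mullLen_add_segStart hl (isPartition_removeNode hp hr) n
  have htail : dropRows (segStart l p n) (removeNode p r) = dropRows (segStart l p n) p :=
    funext fun i => if_neg (by omega)
  rw [heq, htail, ← mullLen_add_segStart hl hp] at hq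
  exact Nat.add_right_cancel hq

lemma isLRegular_removeNode_of_apply_ne {r : ℕ} (hl : 2 ≤ l) (hp : IsPartition p)
    (hreg : IsLRegular l p) (hne : p r ≠ 1 → p (r + l - 1) ≠ p r - 1) :
    IsLRegular l (removeNode p r) := by
  intro b hb heq
  rw [removeNode] at hb
  rw [removeNode, removeNode] at heq
  split_ifs at hb heq with hbr hbl hbl
  · omega
  · subst hbr
    exact hne (by omega) heq
  · have := hp.antitone (show b ≤ r by omega)
    omega
  · exact hreg b hb heq

namespace IsShortestRun

variable {i r : ℕ}

lemma apply_lastRow (hl : 0 < l) (hp : IsPartition p) (hgap : IsFirstGap l p i)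
    (hm : IsShortestRun l p i m) (hr : r + 1 = segStart l p m + runLen p (segStart l p m)) :
    p r = p (segStart l p m) := by
  have hne := hgap.apply_segStart_ne_zero hl hp hm.1
  have := hp.runLen_pos hne
  rw [← (hp.lt_runLen_iff hne (t := r - segStart l p m)).1 (by omega)]
  congr 1
  omega

lemma removable_lastRow (hl : 0 < l) (hp : IsPartition p) (hgap : IsFirstGap l p i)
    (hm : IsShortestRun l p i m) (hr : r + 1 = segStart l p m + runLen p (segStart l p m)) :
    Removable p r := by
  have hne := hgap.apply_segStart_ne_zero hl hp hm.1
  refine (hp.antitone (Nat.le_add_right r 1)).lt_of_ne ?_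
  rw [hm.apply_lastRow hl hp hgap hr, hr, Ne, ← hp.lt_runLen_iff hne]
  exact lt_irrefl _

lemma coSuitable_lastRow (hl : 0 < l) (hp : IsPartition p) (hreg : IsLRegular l p)
    (hgap : IsFirstGap l p i) (hm : IsShortestRun l p i m)
    (hr : r + 1 = segStart l p m + runLen p (segStart l p m)) : CoSuitable l p r := by
  have hne := hgap.apply_segStart_ne_zero hl hp hm.1
  have hpos := hp.runLen_pos hne
  have hrun := hreg.runLen_lt hl hp hne
  have hbead : bead p r + 1 = bead p (segStart l p m) + runLen p (segStart l p m) := by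
    simp only [bead, hm.apply_lastRow hl hp hgap hr]
    omega
  refine coSuitable_of_forall_not_modEq hp (hm.removable_lastRow hl hp hgap hr)
    fun u hur hcorner hmod => ?_
  obtain ⟨j, hju, huj⟩ := hp.exists_segStart_le_lt hl u
  have hjm : j ≤ m := by
    have : r < segStart l p (m + 1) := (hp.lt_segStart_succ_iff hl).2 (by omega)
    exact Nat.lt_succ_iff.1 <|
      (hp.segStart_strictMono hl).lt_iff_lt.1 (hju.trans_lt (hur.trans_lt this))
  have hdist : bead p u = bead p (segStart l p j) + runLen p (segStart l p m) := by
    rw [hbead] at hmod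
    have hmod' := (hmod.trans ((hgap.bead_segStart_modEq hm.1 (hjm.trans hm.1)).add_right _)).sub
      (Int.ModEq.refl (bead p (segStart l p j)))
    rw [add_sub_cancel_left] at hmod'
    have := (hp.lt_segStart_succ_iff hl).1 huj
    have := hp.bead_strictMono.monotone hju
    rw [Int.ModEq, Int.emod_eq_of_lt (by omega) (by omega),
      Int.emod_eq_of_lt (by omega) (by omega)] at hmod'
    omega
  have hlt := hcorner (segStart l p j) (hju.lt_of_ne (by rintro h; rw [← h] at hdist; omega))
  have hshort := hm.2.1 j (hjm.trans hm.1)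
  have heq := (hp.lt_runLen_iff (a := segStart l p j) (t := u - segStart l p j) (by omega)).1 (by
    simp only [bead] at hdist
    omega)
  rw [Nat.add_sub_cancel' hju] at heq
  omega

lemma isLRegular_removeNode_lastRow (hl : 2 ≤ l) (hp : IsPartition p) (hreg : IsLRegular l p)
    (hgap : IsFirstGap l p i) (hm : IsShortestRun l p i m)
    (hr : r + 1 = segStart l p m + runLen p (segStart l p m)) :
    IsLRegular l (removeNode p r) := by
  have hl0 : 0 < l := by omega
  have hne := hgap.apply_segStart_ne_zero hl0 hp hm.1
  have hpos := hp.runLen_pos hne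
  have hrun := hreg.runLen_lt hl0 hp hne
  have hpr := hm.apply_lastRow hl0 hp hgap hr
  have hremov : p (r + 1) < p r := hm.removable_lastRow hl0 hp hgap hr
  refine isLRegular_removeNode_of_apply_ne hl hp hreg fun hone heq => ?_
  have hblock : ∀ t, r < t → t ≤ r + l - 1 → p t = p r - 1 := by
    intro t hrt htl
    have := hp.antitone (show r + 1 ≤ t from hrt)
    have := hp.antitone htl
    omega
  have hnext := hblock (segStart l p m + l - 1) (by omega) (by omega)
  have hjoin : bead p (segStart l p m + l - 1) = bead p (segStart l p m) + l := by
    simp only [bead, hnext]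
    omega
  have hstart := hp.segStart_succ_eq_of_bead_eq hl0 hjoin
  have hmi : m < i := by
    refine hm.1.lt_of_ne fun h => ?_
    have := hgap.2.1
    rw [← h, hstart, hjoin] at this
    exact lt_irrefl _ this
  have hlong := hm.2.2 (m + 1) hmi (Nat.lt_add_one m)
  rw [hp.lt_runLen_iff (hgap.apply_segStart_ne_zero hl0 hp hmi), hstart, hnext] at hlong
  refine hreg (r + 1) ?_ ?_ <;> rw [hblock (r + 1) (by omega) (by omega)]
  · omega
  · rw [← hlong]
    congr 1
    omega

lemma bead_segStart_removeNode (hl : 0 < l) (hp : IsPartition p) (hgap : IsFirstGap l p i)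
    (hm : IsShortestRun l p i m) (hrun : runLen p (segStart l p m) = 1) {j : ℕ} (hmj : m ≤ j)
    (hji : j ≤ i) :
    bead (removeNode p (segStart l p m)) (segStart l (removeNode p (segStart l p m)) j) =
      bead p (segStart l p j) + 1 := by
  have hremov := hm.removable_lastRow hl hp hgap (r := segStart l p m) (by omega)
  induction j, hmj using Nat.le_induction with
  | base =>
    rw [segStart_removeNode_of_le hl hp hremov le_rfl,
      bead_removeNode_self (Nat.ne_zero_of_lt hremov)]
  | succ j hmj ih =>
    have hlt := hp.segStart_strictMono hl (show m < j + 1 by omega)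
    have hrow := (hp.lt_runLen_iff (hgap.apply_segStart_ne_zero hl hp hji)).1
      (hrun ▸ hm.2.2 (j + 1) hji (by omega))
    have hbead : bead p (segStart l p (j + 1) + 1) = bead p (segStart l p (j + 1)) + 1 := by
      simp only [bead, hrow]
      omega
    rw [(isPartition_removeNode hp hremov).segStart_succ_eq_of_bead_eq hl
        (r := segStart l p (j + 1) + 1), bead_removeNode_of_ne (by omega), hbead]
    rw [bead_removeNode_of_ne (by omega), hbead, ih (by omega), hgap.1 j hji]
    ring

lemma segStart_succ_removeNode_of_runLen_eq_one (hl : 0 < l) (hp : IsPartition p)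
    (hgap : IsFirstGap l p i) (hm : IsShortestRun l p i m)
    (hrun : runLen p (segStart l p m) = 1) :
    segStart l (removeNode p (segStart l p m)) (i + 1) = segStart l p (i + 1) := by
  have hremov := hm.removable_lastRow hl hp hgap (r := segStart l p m) (by omega)
  refine (isPartition_removeNode hp hremov).segStart_succ_eq hl fun t => ?_
  rw [hm.bead_segStart_removeNode hl hp hgap hrun hm.1 le_rfl]
  rcases eq_or_ne t (segStart l p m) with rfl | ht
  · have := hp.bead_strictMono.monotone ((hp.segStart_strictMono hl).monotone hm.1)
    refine iff_of_true (hp.segStart_strictMono hl (Nat.lt_succ_of_le hm.1)) ?_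
    rw [bead_removeNode_self (Nat.ne_zero_of_lt hremov)]
    omega
  · have := hgap.2.1
    have := hp.lt_segStart_succ_iff hl (m := i) (i := t)
    have := hp.bead_strictMono.lt_iff_lt (a := t) (b := segStart l p (i + 1))
    rw [bead_removeNode_of_ne ht]
    omega

lemma segStart_succ_removeNode_of_one_lt_runLen (hl : 0 < l) (hp : IsPartition p)
    (hreg : IsLRegular l p) (hgap : IsFirstGap l p i) (hm : IsShortestRun l p i m)
    (hr : r + 1 = segStart l p m + runLen p (segStart l p m))
    (hrun : 1 < runLen p (segStart l p m)) :
    segStart l (removeNode p r) (m + 1) = segStart l p (m + 1) := by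
  have hremov := hm.removable_lastRow hl hp hgap hr
  refine (isPartition_removeNode hp hremov).segStart_succ_eq hl fun t => ?_
  rw [segStart_removeNode_of_le hl hp hremov (by omega),
    bead_removeNode_of_ne (i := segStart l p m) (by omega), hp.lt_segStart_succ_iff hl]
  rcases eq_or_ne t r with rfl | ht
  · have := hreg.runLen_lt hl hp (hgap.apply_segStart_ne_zero hl hp hm.1)
    rw [bead_removeNode_self (Nat.ne_zero_of_lt hremov)]
    simp only [bead, hm.apply_lastRow hl hp hgap hr]
    omega
  · rw [bead_removeNode_of_ne ht]

lemma mullLen_removeNode_lastRow (hl : 0 < l) (hp : IsPartition p) (hreg : IsLRegular l p)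
    (hgap : IsFirstGap l p i) (hm : IsShortestRun l p i m)
    (hr : r + 1 = segStart l p m + runLen p (segStart l p m)) :
    mullLen l (removeNode p r) = mullLen l p := by
  have hremov := hm.removable_lastRow hl hp hgap hr
  have hne := hgap.apply_segStart_ne_zero hl hp hm.1
  rcases (show 1 ≤ runLen p (segStart l p m) from hp.runLen_pos hne).eq_or_lt with hrun | hrun
  · obtain rfl : r = segStart l p m := by omega
    exact mullLen_removeNode_of_segStart_eq hl hp hremov
      (hm.segStart_succ_removeNode_of_runLen_eq_one hl hp hgap hrun.symm)
      (hp.segStart_strictMono hl (Nat.lt_succ_of_le hm.1))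
  · refine mullLen_removeNode_of_segStart_eq hl hp hremov
      (hm.segStart_succ_removeNode_of_one_lt_runLen hl hp hreg hgap hr hrun) ?_
    have := hreg.runLen_lt hl hp hne
    rw [hp.lt_segStart_succ_iff hl]
    simp only [bead, hm.apply_lastRow hl hp hgap hr]
    omega

end IsShortestRun

/-- Let `μ` be an `l`-regular partition which is edge `l`-disconnected. Then there is a
co-suitable node `R` of `μ` such that `μ_R` is `l`-regular and
`ℓ(Mull(μ)) = ℓ(Mull(μ_R))`. -/
theorem exists_cosuitable_of_disconnected (l : ℕ) (hl : 2 ≤ l) (p : ℕ → ℕ)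
    (hp : IsPartition p) (hreg : IsLRegular l p)
    (hdisc : ¬ EdgeLConnected l p) :
    ∃ i : ℕ, CoSuitable l p i ∧ IsLRegular l (removeNode p i) ∧
      plen (mull l p) = plen (mull l (removeNode p i)) := by
  have hl0 : 0 < l := by omega
  obtain ⟨i, hgap⟩ := exists_isFirstGap hl0 hp hdisc
  obtain ⟨m, hm⟩ := exists_isShortestRun l p i
  have hpos := hp.runLen_pos (hgap.apply_segStart_ne_zero hl0 hp hm.1)
  obtain ⟨r, hr⟩ : ∃ r, r + 1 = segStart l p m + runLen p (segStart l p m) :=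
    ⟨_, Nat.sub_add_cancel (by omega)⟩
  have hremov := hm.removable_lastRow hl0 hp hgap hr
  have hreg' := hm.isLRegular_removeNode_lastRow hl hp hreg hgap hr
  refine ⟨r, hm.coSuitable_lastRow hl0 hp hreg hgap hr, hreg', ?_⟩
  rw [plen_mull hl hp hreg, plen_mull hl (isPartition_removeNode hp hremov) hreg',
    hm.mullLen_removeNode_lastRow hl0 hp hreg hgap hr]
end
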